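/- arXiv:2108.06642 — 2 statements merged into one kernel-verified Lean document; each statement's English description precedes it below -/
import Mathlib

section
/- Let R be a ring. Then (GP(R), P(R)) is a strong left Frobenius pair in the category R-Mod of left R-modules: GP(R) is closed under extensions and under kernels of epimorphisms, P(R) ⊆ GP(R) with Ext^i_R(G, P) = 0 = Ext^i_R(P, G) for all i ≥ 1, G ∈ GP(R), P ∈ P(R), every G ∈ GP(R) admits a short exact sequence 0 → G → P → G' → 0 with P projective and G' Gorenstein projective, and every G ∈ GP(R) admits a short exact sequence 0 → G'' → P' → G → 0 with P' projective and G'' Gorenstein projective. -/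
/-!
For a self-orthogonal class `W`, let `𝒳` consist of the objects that admit a coresolution by `W`
all of whose cosyzygies lie in `^⊥W`. When `W` is the class of projectives, these are the Gorenstein
projectives: a coresolution extends to the left by a projective resolution, splicing then gives a
complete resolution, and conversely dimension shifting along a complete resolution shows that its
cycles lie in `^⊥W`.

Membership in `𝒳` only has to be tested one coresolution step `0 → A → P → P/A → 0` at a time, and
each such step comes from the `3 × 3` lemma. For an extension it is the horseshoe construction.
For the kernel `A` of an epimorphism `B → D`, the third isomorphism theorem exhibits `P/A` as an
extension of `P/B` by `D`. For a direct summand `A` of `G = A ⊞ N`, it exhibits `P/A` as an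
extension of `P/G` by `N`, so that `A ⊞ P/A`, as an extension of `P/G` by `A ⊞ N = G`, again lies
in `𝒳`.
-/

open CategoryTheory CategoryTheory.Limits CategoryTheory.Abelian ZeroObject

universe w v u

namespace FrobeniusPaper

variable {C : Type u} [Category.{v} C] [Abelian C]

/-- `f, g` form a short exact sequence `0 → A → B → D → 0` in the abelian category `C`. -/
def IsSES {A B D : C} (f : A ⟶ B) (g : B ⟶ D) : Prop :=
  ∃ w : f ≫ g = 0, (ShortComplex.mk f g w).ShortExact

/-- A "subcategory" in the sense of the paper: a full additive subcategory, regarded as the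
predicate of membership for its objects, closed under isomorphisms and direct summands. -/
structure IsSubcat (X : C → Prop) : Prop where
  zero : X 0
  iso_closed : ∀ {A B : C}, (A ≅ B) → X A → X B
  biprod_closed : ∀ {A B : C}, X A → X B → X (A ⊞ B)
  summand_closed : ∀ {A M : C} (i : A ⟶ M) (p : M ⟶ A), i ≫ p = 𝟙 A → X M → X A

/-- `Hat X n M` means `M ∈ X̂ₙ`, i.e. there is an exact sequence
`0 → Xₙ → ⋯ → X₁ → X₀ → M → 0` with all `Xᵢ ∈ X`. -/
def Hat (X : C → Prop) : ℕ → C → Prop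
  | 0, M => X M
  | (n + 1), M => ∃ (K E : C) (f : K ⟶ E) (g : E ⟶ M), IsSES f g ∧ X E ∧ Hat X n K

/-- `M ∈ X̂ = ⋃ₙ X̂ₙ`. -/
def HatAll (X : C → Prop) (M : C) : Prop := ∃ n, Hat X n M

/-- `W` is a cogenerator for `X`. -/
def IsCogenerator (W X : C → Prop) : Prop :=
  (∀ M, W M → X M) ∧
    ∀ M, X M → ∃ (W₀ X' : C) (f : M ⟶ W₀) (g : W₀ ⟶ X'), IsSES f g ∧ W W₀ ∧ X X'

/-- `W` is a generator for `X`. -/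
def IsGenerator (W X : C → Prop) : Prop :=
  (∀ M, W M → X M) ∧
    ∀ M, X M → ∃ (X' W₀ : C) (f : X' ⟶ W₀) (g : W₀ ⟶ M), IsSES f g ∧ W W₀ ∧ X X'

/-- `X` is closed under extensions. -/
def ExtClosed (X : C → Prop) : Prop :=
  ∀ ⦃A B D : C⦄ (f : A ⟶ B) (g : B ⟶ D), IsSES f g → X A → X D → X B

/-- `X` is closed under kernels of epimorphisms. -/
def KerEpiClosed (X : C → Prop) : Prop :=
  ∀ ⦃A B D : C⦄ (f : A ⟶ B) (g : B ⟶ D), IsSES f g → X B → X D → X A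

/-- A thick subcategory: closed under direct summands and two-out-of-three for
short exact sequences. -/
def IsThickSub (T : C → Prop) : Prop :=
  IsSubcat T ∧ ∀ ⦃A B D : C⦄ (f : A ⟶ B) (g : B ⟶ D), IsSES f g →
    (T A → T B → T D) ∧ (T A → T D → T B) ∧ (T B → T D → T A)

/-- Membership in `Thick(X)`, the smallest thick subcategory containing `X`. -/
def thickClosure (X : C → Prop) (M : C) : Prop :=
  ∀ T : C → Prop, IsThickSub T → (∀ N, X N → T N) → T M

variable [HasExt.{w} C]

/-- `Y ∈ X^⊥`, i.e. `Extⁱ(M, Y) = 0` for all `i ≥ 1` and `M ∈ X`. -/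
def rightPerp (X : C → Prop) (Y : C) : Prop :=
  ∀ M, X M → ∀ i : ℕ, 1 ≤ i → Subsingleton (Abelian.Ext M Y i)

/-- A left Frobenius pair `(X, W)`. -/
structure LeftFrobenius (X W : C → Prop) : Prop where
  subX : IsSubcat X
  subW : IsSubcat W
  extClosed : ExtClosed X
  kerEpiClosed : KerEpiClosed X
  cogen : IsCogenerator W X
  perp : ∀ M, W M → rightPerp X M

/-- A strong left Frobenius pair `(X, W)`. -/
structure StrongLeftFrobenius (X W : C → Prop) extends LeftFrobenius X W : Prop where
  gen : IsGenerator W X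
  proj : ∀ M N, W M → X N → ∀ i : ℕ, 1 ≤ i → Subsingleton (Abelian.Ext M N i)

/-- A cotorsion pair `(U, V)` on an extension-closed subcategory `B` of `C`. -/
structure CotorsionPairOn (B U V : C → Prop) : Prop where
  subU : ∀ M, U M → B M
  subV : ∀ M, V M → B M
  isoU : ∀ {A B' : C}, (A ≅ B') → U A → U B'
  summandU : ∀ {A M : C} (i : A ⟶ M) (p : M ⟶ A), i ≫ p = 𝟙 A → U M → U A
  isoV : ∀ {A B' : C}, (A ≅ B') → V A → V B'
  summandV : ∀ {A M : C} (i : A ⟶ M) (p : M ⟶ A), i ≫ p = 𝟙 A → V M → V A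
  ext1 : ∀ M N, U M → V N → Subsingleton (Abelian.Ext M N 1)
  res : ∀ M, B M → ∃ (V₀ U₀ : C) (f : V₀ ⟶ U₀) (g : U₀ ⟶ M), IsSES f g ∧ U U₀ ∧ V V₀
  cores : ∀ M, B M → ∃ (V₀ U₀ : C) (f : M ⟶ V₀) (g : V₀ ⟶ U₀), IsSES f g ∧ U U₀ ∧ V V₀

/-- `GClass X W M`: there exists a doubly infinite exact sequence
`⋯ → P₋₁ → P₀ → P₁ → ⋯` with all terms in `X`, with `M ≅ Ker(P₀ → P₁)`, and such that the
complex `Hom(P, Q)` is exact for every `Q ∈ W`. -/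
def GClass (X W : C → Prop) (M : C) : Prop :=
  ∃ (P : ℤ → C) (d : ∀ n : ℤ, P n ⟶ P (n + 1)) (hd : ∀ n, d n ≫ d (n + 1) = 0),
    (∀ n, X (P n)) ∧
    (∀ n, (ShortComplex.mk (d n) (d (n + 1)) (hd n)).Exact) ∧
    Nonempty (M ≅ kernel (d 0)) ∧
    (∀ Q : C, W Q → ∀ (n : ℤ) (ψ : P (n + 1) ⟶ Q), d n ≫ ψ = 0 →
      ∃ φ : P (n + 1 + 1) ⟶ Q, d (n + 1) ≫ φ = ψ)

section Abelian

omit [HasExt.{w} C]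

namespace IsSES

variable {A B D : C} {f : A ⟶ B} {g : B ⟶ D}

theorem comp_eq_zero (h : IsSES f g) : f ≫ g = 0 := h.choose

theorem shortExact (h : IsSES f g) : (ShortComplex.mk f g h.comp_eq_zero).ShortExact :=
  h.choose_spec

theorem mono (h : IsSES f g) : Mono f := h.shortExact.mono_f

theorem epi (h : IsSES f g) : Epi g := h.shortExact.epi_g

theorem exists_desc (h : IsSES f g) {T : C} (x : B ⟶ T) (hx : f ≫ x = 0) :
    ∃ y : D ⟶ T, g ≫ y = x :=
  have := h.epi
  ⟨h.shortExact.exact.desc x hx, h.shortExact.exact.g_desc x hx⟩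

end IsSES

theorem isSES_cokernel {A B : C} (f : A ⟶ B) [Mono f] : IsSES f (cokernel.π f) :=
  ⟨cokernel.condition f,
    { exact := ShortComplex.exact_cokernel f
      mono_f := ‹Mono f›
      epi_g := inferInstanceAs (Epi (cokernel.π f)) }⟩

theorem isSES_kernel {A B : C} (g : A ⟶ B) [Epi g] : IsSES (kernel.ι g) g :=
  ⟨kernel.condition g,
    { exact := ShortComplex.exact_kernel g
      mono_f := inferInstanceAs (Mono (kernel.ι g))
      epi_g := ‹Epi g› }⟩

theorem isSES_biprod (A B : C) : IsSES (biprod.inl : A ⟶ A ⊞ B) (biprod.snd : A ⊞ B ⟶ B) :=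
  ⟨biprod.inl_snd, (ShortComplex.Splitting.ofHasBinaryBiproduct A B).shortExact⟩

theorem isSES_zero_id (A : C) : IsSES (0 : (0 : C) ⟶ A) (𝟙 A) :=
  ⟨zero_comp, (ShortComplex.Splitting.ofIsZeroOfIsIso _ (isZero_zero C)
    (inferInstanceAs (IsIso (𝟙 A)))).shortExact⟩

theorem isSES_id_zero (A : C) : IsSES (𝟙 A) (0 : A ⟶ (0 : C)) :=
  ⟨comp_zero, (ShortComplex.Splitting.ofIsIsoOfIsZero _ (inferInstanceAs (IsIso (𝟙 A)))
    (isZero_zero C)).shortExact⟩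

theorem isSES_kernel_ι_kernel_lift {S : ShortComplex C} (hS : S.Exact) :
    IsSES (kernel.ι S.f) (kernel.lift S.g S.f S.zero) := by
  have w : kernel.ι S.f ≫ kernel.lift S.g S.f S.zero = 0 := by
    simp [← cancel_mono (kernel.ι S.g)]
  let φ : ShortComplex.mk _ _ w ⟶ ShortComplex.mk _ _ (kernel.condition S.f) :=
    { τ₁ := 𝟙 _, τ₂ := 𝟙 _, τ₃ := kernel.ι S.g }
  have : Epi φ.τ₁ := inferInstanceAs (Epi (𝟙 _))
  have : IsIso φ.τ₂ := inferInstanceAs (IsIso (𝟙 _))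
  have : Mono φ.τ₃ := inferInstanceAs (Mono (kernel.ι S.g))
  exact ⟨w,
    { exact := (ShortComplex.exact_iff_of_epi_of_isIso_of_mono φ).2 (ShortComplex.exact_kernel S.f)
      mono_f := inferInstanceAs (Mono (kernel.ι S.f))
      epi_g := hS.epi_kernelLift }⟩

theorem IsSES.exact_epi_comp_comp_mono {A B D E F : C} {f : A ⟶ B} {g : B ⟶ D}
    (h : IsSES f g) (e : E ⟶ A) (m : D ⟶ F) [Epi e] [Mono m] :
    (ShortComplex.mk (e ≫ f) (g ≫ m) (by simp [reassoc_of% h.comp_eq_zero])).Exact := by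
  have w : (e ≫ f) ≫ g = 0 := by simp [h.comp_eq_zero]
  let φ : ShortComplex.mk (e ≫ f) g w ⟶ ShortComplex.mk f g h.comp_eq_zero :=
    { τ₁ := e, τ₂ := 𝟙 _, τ₃ := 𝟙 _ }
  let ψ : ShortComplex.mk (e ≫ f) g w ⟶
      ShortComplex.mk (e ≫ f) (g ≫ m) (by simp [reassoc_of% h.comp_eq_zero]) :=
    { τ₁ := 𝟙 _, τ₂ := 𝟙 _, τ₃ := m }
  have : Epi φ.τ₁ := ‹Epi e›
  have : Mono ψ.τ₃ := ‹Mono m›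
  have hφ := (ShortComplex.exact_iff_of_epi_of_isIso_of_mono φ).2 h.shortExact.exact
  exact (ShortComplex.exact_iff_of_epi_of_isIso_of_mono ψ).1 hφ

theorem shortExact_of_isColimit_cokernelCofork {S₁ S₂ S₃ : ShortComplex C} {φ : S₁ ⟶ S₂}
    {ψ : S₂ ⟶ S₃} (w : φ ≫ ψ = 0) (hψ : IsColimit (CokernelCofork.ofπ ψ w)) (h₁ : S₁.ShortExact)
    (h₂ : S₂.ShortExact) [Mono φ.τ₃] : S₃.ShortExact := by
  have := h₂.epi_g
  let snake : ShortComplex.SnakeInput C :=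
    { L₀ := kernel φ
      L₁ := S₁
      L₂ := S₂
      L₃ := S₃
      v₀₁ := kernel.ι φ
      v₁₂ := φ
      v₂₃ := ψ
      h₀ := kernelIsKernel φ
      h₃ := hψ
      w₀₂ := kernel.condition φ
      L₁_exact := h₁.exact
      epi_L₁_g := h₁.epi_g
      L₂_exact := h₂.exact
      mono_L₂_f := h₂.mono_f }
  have := snake.mono_v₀₁_τ₃
  have hker : IsZero snake.L₀.X₃ :=
    IsZero.of_mono_eq_zero snake.v₀₁.τ₃ (zero_of_comp_mono φ.τ₃ snake.w₀₂_τ₃)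
  exact
    { exact := snake.L₃_exact
      mono_f := snake.L₂'_exact.mono_g (hker.eq_of_src _ _)
      epi_g := snake.epi_L₃_g }

theorem IsSES.nine_lemma {A B D A' B' D' A'' D'' : C} {f : A ⟶ B} {g : B ⟶ D}
    {f' : A' ⟶ B'} {g' : B' ⟶ D'} {α : A ⟶ A'} {β : B ⟶ B'} {γ : D ⟶ D'} {a : A' ⟶ A''}
    {c : D' ⟶ D''} (h : IsSES f g) (h' : IsSES f' g') (hα : IsSES α a) (hγ : IsSES γ c)
    (hf : α ≫ f' = f ≫ β) (hg : β ≫ g' = g ≫ γ) :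
    ∃ (E : C) (q : B' ⟶ E) (u : A'' ⟶ E) (v : E ⟶ D''), IsSES β q ∧ IsSES u v := by
  have := hα.mono
  have := hγ.mono
  have := hα.epi
  let φ : ShortComplex.mk f g h.comp_eq_zero ⟶ ShortComplex.mk f' g' h'.comp_eq_zero :=
    { τ₁ := α, τ₂ := β, τ₃ := γ, comm₁₂ := hf, comm₂₃ := hg }
  have : Mono β :=
    ShortComplex.mono_of_mono_of_mono_of_mono φ h.shortExact.exact h'.mono ‹_› ‹_›
  obtain ⟨u, hu⟩ := hα.exists_desc (f' ≫ cokernel.π β) (by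
    rw [reassoc_of% hf, cokernel.condition, comp_zero])
  obtain ⟨v, hv⟩ := (isSES_cokernel β).exists_desc (g' ≫ c) (by
    rw [reassoc_of% hg, hγ.comp_eq_zero, comp_zero])
  have huv : u ≫ v = 0 := by
    rw [← cancel_epi a, reassoc_of% hu, hv, reassoc_of% h'.comp_eq_zero, zero_comp, comp_zero]
  let ψ : ShortComplex.mk f' g' h'.comp_eq_zero ⟶ ShortComplex.mk u v huv :=
    { τ₁ := a, τ₂ := cokernel.π β, τ₃ := c, comm₁₂ := hu, comm₂₃ := hv }
  have w : φ ≫ ψ = 0 := ShortComplex.hom_ext _ _ hα.comp_eq_zero (cokernel.condition β)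
    hγ.comp_eq_zero
  have hψ : IsColimit (CokernelCofork.ofπ ψ w) := by
    apply ShortComplex.isColimitOfIsColimitπ <;>
      apply (CokernelCofork.isColimitMapCoconeEquiv _ _).2
    exacts [hα.shortExact.gIsCokernel, cokernelIsCokernel β, hγ.shortExact.gIsCokernel]
  have : Mono φ.τ₃ := ‹Mono γ›
  exact ⟨cokernel β, cokernel.π β, u, v, isSES_cokernel β, huv,
    shortExact_of_isColimit_cokernelCofork w hψ h.shortExact h'.shortExact⟩

theorem IsSES.third_isomorphism {A B D P B' : C} {f : A ⟶ B} {g : B ⟶ D} {i : B ⟶ P}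
    {p : P ⟶ B'} (h : IsSES f g) (h' : IsSES i p) :
    ∃ (E : C) (q : P ⟶ E) (u : D ⟶ E) (v : E ⟶ B'), IsSES (f ≫ i) q ∧ IsSES u v :=
  IsSES.nine_lemma (isSES_id_zero A) h' h (isSES_zero_id B') (Category.id_comp _).symm
    (by simp [h'.comp_eq_zero])

/-- `B` is a cosyzygy of `A` with respect to `X` and `W`: the cokernel of a monomorphism from `A`
to an object of `X` along which every morphism from `A` to an object of `W` extends. -/
def IsCosyzygy (X W : C → Prop) (A B : C) : Prop :=
  ∃ (P : C) (i : A ⟶ P) (p : P ⟶ B), IsSES i p ∧ X P ∧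
    ∀ Q, W Q → ∀ a : A ⟶ Q, ∃ b : P ⟶ Q, i ≫ b = a

theorem gClass_of_isCosyzygy {X W : C → Prop} {Z : ℤ → C}
    (hZ : ∀ n, IsCosyzygy X W (Z n) (Z (n + 1))) : GClass X W (Z 0) := by
  choose P i p hip hP hext using hZ
  have (n : ℤ) : Mono (i n) := (hip n).mono
  have (n : ℤ) : Epi (p n) := (hip n).epi
  refine ⟨P, fun n => p n ≫ i (n + 1), fun n => ?_, hP,
    fun n => (hip (n + 1)).exact_epi_comp_comp_mono (p n) (i (n + 1 + 1)), ⟨?_⟩, ?_⟩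
  · simp [reassoc_of% (hip (n + 1)).comp_eq_zero]
  · exact ((hip 0).shortExact.fIsKernel.conePointUniqueUpToIso (kernelIsKernel (p 0))).trans
      (kernelCompMono (p 0) (i (0 + 1))).symm
  · intro Q hQ n ψ hψ
    obtain ⟨θ, hθ⟩ := (hip (n + 1)).exists_desc ψ
      (zero_of_epi_comp (p n) (by rwa [← Category.assoc]))
    obtain ⟨φ, hφ⟩ := hext (n + 1 + 1) Q hQ θ
    exact ⟨φ, by rw [Category.assoc, hφ, hθ]⟩

theorem GClass.exists_isCosyzygy {X W : C → Prop} {M : C} (hM : GClass X W M) :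
    ∃ Z : ℤ → C, Nonempty (M ≅ Z 0) ∧ ∀ n, IsCosyzygy X W (Z n) (Z (n + 1)) := by
  obtain ⟨P, d, hd, hP, hexact, e, hext⟩ := hM
  have hses (n : ℤ) : IsSES (kernel.ι (d n)) (kernel.lift (d (n + 1)) (d n) (hd n)) :=
    isSES_kernel_ι_kernel_lift (hexact n)
  refine ⟨fun n => kernel (d n), e, fun n => ⟨P n, _, _, hses n, hP n, fun Q hQ a => ?_⟩⟩
  obtain ⟨m, rfl⟩ : ∃ m, n = m + 1 + 1 := ⟨n - 2, by ring⟩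
  let c := kernel.lift (d (m + 1 + 1)) (d (m + 1)) (hd (m + 1))
  have hc : c ≫ kernel.ι (d (m + 1 + 1)) = d (m + 1) := kernel.lift_ι _ _ _
  have : Epi c := (hses (m + 1)).epi
  have hdc : d m ≫ c = 0 := zero_of_comp_mono (kernel.ι _) (by rw [Category.assoc, hc, hd])
  obtain ⟨b, hb⟩ := hext Q hQ m (c ≫ a) (by rw [reassoc_of% hdc, zero_comp])
  exact ⟨b, by rw [← cancel_epi c, reassoc_of% hc, hb]⟩

theorem isSubcat_projective : IsSubcat (fun P : C => Projective P) where
  zero := inferInstance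
  iso_closed e hA := Projective.of_iso e hA
  biprod_closed _ _ := inferInstance
  summand_closed i p hip _ := Retract.projective ⟨i, p, hip⟩

end Abelian

theorem exists_int_chain {α : Type*} {r : α → α → Prop} (hsucc : ∀ a, ∃ b, r a b)
    (hpred : ∀ b, ∃ a, r a b) (a : α) :
    ∃ z : ℤ → α, z 0 = a ∧ ∀ n, r (z n) (z (n + 1)) := by
  choose s hs using hsucc
  choose t ht using hpred
  refine ⟨fun n => Int.inductionOn' n 0 a (fun _ _ => s) fun _ _ => t,
    Int.inductionOn'_self, fun n => ?_⟩
  beta_reduce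
  rcases le_or_gt 0 n with hn | hn
  · rw [Int.inductionOn'_add_one hn]
    exact hs _
  · obtain ⟨m, rfl⟩ : ∃ m, n = m - 1 := ⟨n + 1, by ring⟩
    rw [Int.inductionOn'_sub_one (by omega : m ≤ 0), sub_add_cancel]
    exact ht _

theorem IsSES.exists_extension {A B D Q : C} {f : A ⟶ B} {g : B ⟶ D} (h : IsSES f g)
    [Subsingleton (Ext D Q 1)] (a : A ⟶ Q) : ∃ b : B ⟶ Q, f ≫ b = a := by
  obtain ⟨y, hy⟩ := Ext.contravariant_sequence_exact₁ h.shortExact Q (Ext.mk₀ a) (add_zero 1)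
    (Subsingleton.elim _ _)
  obtain ⟨b, rfl⟩ := (Ext.mk₀_bijective _ _).2 y
  rw [Ext.mk₀_comp_mk₀] at hy
  exact ⟨b, (Ext.mk₀_bijective _ _).1 hy⟩

theorem IsSES.subsingleton_ext_one {A B D Q : C} {f : A ⟶ B} {g : B ⟶ D} (h : IsSES f g)
    [Subsingleton (Ext B Q 1)] (hext : ∀ a : A ⟶ Q, ∃ b : B ⟶ Q, f ≫ b = a) :
    Subsingleton (Ext D Q 1) := by
  refine subsingleton_of_forall_eq 0 fun x => ?_
  obtain ⟨y, rfl⟩ := Ext.contravariant_sequence_exact₃ h.shortExact Q x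
    (Subsingleton.elim _ _) (add_zero 1)
  obtain ⟨a, rfl⟩ := (Ext.mk₀_bijective _ _).2 y
  obtain ⟨b, rfl⟩ := hext a
  rw [← Ext.mk₀_comp_mk₀]
  exact h.shortExact.extClass_comp_assoc _

theorem IsSES.subsingleton_ext_succ {A B D Q : C} {f : A ⟶ B} {g : B ⟶ D} (h : IsSES f g)
    (n : ℕ) [Subsingleton (Ext A Q n)] [Subsingleton (Ext B Q (n + 1))] :
    Subsingleton (Ext D Q (n + 1)) := by
  refine subsingleton_of_forall_eq 0 fun x => ?_
  obtain ⟨y, rfl⟩ := Ext.contravariant_sequence_exact₃ h.shortExact Q x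
    (Subsingleton.elim _ _) (add_comm 1 n)
  rw [Subsingleton.elim y 0, Ext.comp_zero]

/-- `M ∈ ^⊥W`, i.e. `Extⁱ(M, Q) = 0` for all `i ≥ 1` and `Q ∈ W`; the dual of `rightPerp`. -/
def leftPerp (W : C → Prop) (M : C) : Prop :=
  ∀ Q, W Q → ∀ i : ℕ, 1 ≤ i → Subsingleton (Ext M Q i)

section leftPerp

variable {W : C → Prop}

theorem leftPerp_of_projective {P : C} [Projective P] : leftPerp W P := fun Q _ i hi => by
  obtain ⟨k, rfl⟩ := Nat.exists_eq_add_of_le' hi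
  exact Ext.subsingleton_of_projective P Q k

theorem extClosed_leftPerp : ExtClosed (leftPerp W) := by
  intro A B D f g h hA hD Q hQ i hi
  have := hA Q hQ i hi
  have := hD Q hQ i hi
  refine subsingleton_of_forall_eq 0 fun x => ?_
  obtain ⟨y, rfl⟩ := Ext.contravariant_sequence_exact₂ h.shortExact Q x (Subsingleton.elim _ _)
  rw [Subsingleton.elim y 0, Ext.comp_zero]

theorem kerEpiClosed_leftPerp : KerEpiClosed (leftPerp W) := by
  intro A B D f g h hB hD Q hQ i hi
  have := hB Q hQ i hi
  have := hD Q hQ (1 + i) (by omega)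
  refine subsingleton_of_forall_eq 0 fun x => ?_
  obtain ⟨y, rfl⟩ := Ext.contravariant_sequence_exact₁ h.shortExact Q x rfl
    (Subsingleton.elim _ _)
  rw [Subsingleton.elim y 0, Ext.comp_zero]

theorem leftPerp_of_retract {A M : C} (r : Retract A M) (hM : leftPerp W M) : leftPerp W A := by
  intro Q hQ i hi
  have := hM Q hQ i hi
  refine subsingleton_of_forall_eq 0 fun x => ?_
  calc x = (Ext.mk₀ r.i).comp ((Ext.mk₀ r.r).comp x (zero_add _)) (zero_add _) := by
        rw [Ext.mk₀_comp_mk₀_assoc, r.retract, Ext.mk₀_id_comp]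
    _ = 0 := by rw [Subsingleton.elim ((Ext.mk₀ r.r).comp x _) 0, Ext.comp_zero]

theorem IsSES.isCosyzygy {X : C → Prop} {A P B : C} {i : A ⟶ P} {p : P ⟶ B} (h : IsSES i p)
    (hP : X P) (hB : leftPerp W B) : IsCosyzygy X W A B :=
  ⟨P, i, p, h, hP, fun Q hQ a =>
    have := hB Q hQ 1 le_rfl
    h.exists_extension a⟩

theorem leftPerp_of_isCosyzygy {X : C → Prop} (hX : ∀ P, X P → leftPerp W P) {Z : ℤ → C}
    (hZ : ∀ n, IsCosyzygy X W (Z n) (Z (n + 1))) (n : ℤ) : leftPerp W (Z n) := by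
  intro Q hQ i hi
  induction i, hi using Nat.le_induction generalizing n with
  | base =>
    obtain ⟨m, rfl⟩ : ∃ m, n = m + 1 := ⟨n - 1, by ring⟩
    obtain ⟨P, i, p, hip, hP, hext⟩ := hZ m
    have := hX P hP Q hQ 1 le_rfl
    exact hip.subsingleton_ext_one (hext Q hQ)
  | succ k hk ih =>
    obtain ⟨m, rfl⟩ : ∃ m, n = m + 1 := ⟨n - 1, by ring⟩
    obtain ⟨P, i, p, hip, hP, -⟩ := hZ m
    have := hX P hP Q hQ (k + 1) (by omega)
    have := ih m
    exact hip.subsingleton_ext_succ k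

end leftPerp

/-- Auslander and Reiten's class `𝒳_W`: the objects `M` with an exact coresolution
`0 → M → P⁰ → P¹ → ⋯` by objects of `W` all of whose cosyzygies, including `M`, lie in `^⊥W`.
It is encoded coinductively, as the union of all classes `S ⊆ ^⊥W` in which every object has a
cosyzygy, so that membership can be checked one coresolution step at a time. -/
def AuslanderReitenClass (W : C → Prop) (M : C) : Prop :=
  ∃ S : C → Prop, S M ∧ ∀ N, S N → leftPerp W N ∧
    ∃ (P N' : C) (f : N ⟶ P) (g : P ⟶ N'), IsSES f g ∧ W P ∧ S N'

namespace AuslanderReitenClass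

variable {W : C → Prop}

theorem mem_leftPerp {M : C} (hM : AuslanderReitenClass W M) : leftPerp W M := by
  obtain ⟨S, hM, hS⟩ := hM
  exact (hS M hM).1

theorem exists_cosyzygy {M : C} (hM : AuslanderReitenClass W M) :
    ∃ (P N : C) (f : M ⟶ P) (g : P ⟶ N), IsSES f g ∧ W P ∧ AuslanderReitenClass W N := by
  obtain ⟨S, hM, hS⟩ := hM
  obtain ⟨-, P, N, f, g, hfg, hP, hN⟩ := hS M hM
  exact ⟨P, N, f, g, hfg, hP, S, hN, hS⟩

theorem of_cosyzygy {M P N : C} {f : M ⟶ P} {g : P ⟶ N} (h : IsSES f g)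
    (hM : leftPerp W M) (hP : W P) (hN : AuslanderReitenClass W N) :
    AuslanderReitenClass W M := by
  refine ⟨fun X => X = M ∨ AuslanderReitenClass W X, Or.inl rfl, ?_⟩
  rintro X (rfl | hX)
  · exact ⟨hM, P, N, f, g, h, hP, Or.inr hN⟩
  · obtain ⟨P', N', f', g', h', hP', hN'⟩ := hX.exists_cosyzygy
    exact ⟨hX.mem_leftPerp, P', N', f', g', h', hP', Or.inr hN'⟩

theorem of_mem (hW : IsSubcat W) (hWW : ∀ P, W P → leftPerp W P) {P : C} (hP : W P) :
    AuslanderReitenClass W P :=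
  ⟨W, hP, fun Q hQ => ⟨hWW Q hQ, Q, 0, 𝟙 Q, 0, isSES_id_zero Q, hQ, hW.zero⟩⟩

theorem extClosed (hW : IsSubcat W) : ExtClosed (AuslanderReitenClass W) := by
  intro A B D f g h hA hD
  refine ⟨fun X => ∃ (A D : C) (f : A ⟶ X) (g : X ⟶ D), IsSES f g ∧
    AuslanderReitenClass W A ∧ AuslanderReitenClass W D, ⟨A, D, f, g, h, hA, hD⟩, ?_⟩
  rintro X ⟨A, D, f, g, h, hA, hD⟩
  refine ⟨extClosed_leftPerp f g h hA.mem_leftPerp hD.mem_leftPerp, ?_⟩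
  obtain ⟨P, A', i, p, hi, hP, hA'⟩ := hA.exists_cosyzygy
  obtain ⟨P', D', j, q, hj, hP', hD'⟩ := hD.exists_cosyzygy
  have := hD.mem_leftPerp P hP 1 le_rfl
  obtain ⟨β, hβ⟩ := h.exists_extension i
  obtain ⟨E, s, u, v, hs, huv⟩ := h.nine_lemma (isSES_biprod P P') hi hj
    (β := biprod.lift β (g ≫ j)) (by ext <;> simp [hβ, reassoc_of% h.comp_eq_zero]) (by simp)
  exact ⟨P ⊞ P', E, _, s, hs, hW.biprod_closed hP hP', A', D', u, v, huv, hA', hD'⟩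

theorem kerEpiClosed (hW : IsSubcat W) : KerEpiClosed (AuslanderReitenClass W) := by
  intro A B D f g h hB hD
  obtain ⟨P, B', i, p, hi, hP, hB'⟩ := hB.exists_cosyzygy
  obtain ⟨E, s, u, v, hs, huv⟩ := h.third_isomorphism hi
  exact of_cosyzygy hs (kerEpiClosed_leftPerp f g h hB.mem_leftPerp hD.mem_leftPerp) hP
    (extClosed hW u v huv hD hB')

theorem exists_cosyzygy_of_retract (hW : IsSubcat W) (hWW : ∀ P, W P → leftPerp W P)
    {A G : C} (r : Retract A G) (hG : AuslanderReitenClass W G) :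
    ∃ (P E : C) (f : A ⟶ P) (g : P ⟶ E), IsSES f g ∧ W P ∧ AuslanderReitenClass W (A ⊞ E) := by
  obtain ⟨P, G', j, q, hj, hP, hG'⟩ := hG.exists_cosyzygy
  have hN := isSES_cokernel r.i
  obtain ⟨E, s, u, v, hs, huv⟩ := hN.third_isomorphism hj
  -- `G''` is the cokernel of `G ≅ A ⊞ N → A ⊞ E`, hence isomorphic to the cokernel `G'` of `N → E`.
  obtain ⟨G'', s', u', v', hs', huv'⟩ := hN.nine_lemma (isSES_biprod A E) (isSES_id_zero A) huv
    (β := biprod.lift r.r (cokernel.π r.i ≫ u)) (by ext <;> simp) (by simp)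
  have hG'' := extClosed hW u' v' huv' (of_mem hW hWW hW.zero) hG'
  exact ⟨P, E, r.i ≫ j, s, hs, hP, extClosed hW _ _ hs' hG hG''⟩

theorem of_retract (hW : IsSubcat W) (hWW : ∀ P, W P → leftPerp W P)
    {A M : C} (r : Retract A M) (hM : AuslanderReitenClass W M) : AuslanderReitenClass W A := by
  refine ⟨fun X => ∃ G, Nonempty (Retract X G) ∧ AuslanderReitenClass W G, ⟨M, ⟨r⟩, hM⟩, ?_⟩
  rintro X ⟨G, ⟨r⟩, hG⟩
  obtain ⟨P, E, f, g, hfg, hP, hE⟩ := hG.exists_cosyzygy_of_retract hW hWW r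
  exact ⟨leftPerp_of_retract r hG.mem_leftPerp, P, E, f, g, hfg, hP, X ⊞ E,
    ⟨⟨biprod.inr, biprod.snd, biprod.inr_snd⟩⟩, hE⟩

theorem isSubcat (hW : IsSubcat W) (hWW : ∀ P, W P → leftPerp W P) :
    IsSubcat (AuslanderReitenClass W) where
  zero := of_mem hW hWW hW.zero
  iso_closed e := of_retract hW hWW (.ofIso e.symm)
  biprod_closed hA hB := extClosed hW _ _ (isSES_biprod _ _) hA hB
  summand_closed i p hip := of_retract hW hWW ⟨i, p, hip⟩

theorem leftFrobenius (hW : IsSubcat W) (hWW : ∀ P, W P → leftPerp W P) :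
    LeftFrobenius (AuslanderReitenClass W) W where
  subX := isSubcat hW hWW
  subW := hW
  extClosed := extClosed hW
  kerEpiClosed := kerEpiClosed hW
  cogen := ⟨fun _ => of_mem hW hWW, fun M hM => by
    obtain ⟨P, N, f, g, h, hP, hN⟩ := hM.exists_cosyzygy
    exact ⟨P, N, f, g, h, hP, hN⟩⟩
  perp Q hQ M hM := hM.mem_leftPerp Q hQ

theorem gClass (hgen : IsGenerator W (AuslanderReitenClass W)) {M : C}
    (hM : AuslanderReitenClass W M) : GClass W W M := by
  obtain ⟨Z, hZ₀, hZ⟩ := exists_int_chain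
    (r := fun A B : {M // AuslanderReitenClass W M} => IsCosyzygy W W A.1 B.1)
    (fun A => by
      obtain ⟨P, N, f, g, h, hP, hN⟩ := A.2.exists_cosyzygy
      exact ⟨⟨N, hN⟩, h.isCosyzygy hP hN.mem_leftPerp⟩)
    (fun B => by
      obtain ⟨N, P, f, g, h, hP, hN⟩ := hgen.2 B.1 B.2
      exact ⟨⟨N, hN⟩, h.isCosyzygy hP B.2.mem_leftPerp⟩) ⟨M, hM⟩
  obtain rfl : (Z 0).1 = M := congrArg Subtype.val hZ₀
  exact gClass_of_isCosyzygy hZ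

theorem of_isCosyzygy (hWW : ∀ P, W P → leftPerp W P) {Z : ℤ → C}
    (hZ : ∀ n, IsCosyzygy W W (Z n) (Z (n + 1))) (n : ℤ) : AuslanderReitenClass W (Z n) := by
  refine ⟨fun X => ∃ n, X = Z n, ⟨n, rfl⟩, ?_⟩
  rintro _ ⟨m, rfl⟩
  obtain ⟨P, i, p, hip, hP, -⟩ := hZ m
  exact ⟨leftPerp_of_isCosyzygy hWW hZ m, P, Z (m + 1), i, p, hip, hP, m + 1, rfl⟩

theorem gClass_eq (hW : IsSubcat W) (hWW : ∀ P, W P → leftPerp W P)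
    (hgen : IsGenerator W (AuslanderReitenClass W)) : GClass W W = AuslanderReitenClass W := by
  ext M
  refine ⟨fun hM => ?_, gClass hgen⟩
  obtain ⟨Z, ⟨e⟩, hZ⟩ := hM.exists_isCosyzygy
  exact (isSubcat hW hWW).iso_closed e.symm (of_isCosyzygy hWW hZ 0)

theorem isGenerator_projective [EnoughProjectives C] :
    IsGenerator (fun P : C => Projective P) (AuslanderReitenClass fun P => Projective P) := by
  refine ⟨fun P => of_mem isSubcat_projective fun P _ => leftPerp_of_projective, fun M hM => ?_⟩
  have h := isSES_kernel (Projective.π M)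
  have hker := kerEpiClosed_leftPerp _ _ h leftPerp_of_projective hM.mem_leftPerp
  exact ⟨_, _, _, _, h, inferInstance, of_cosyzygy h hker inferInstance hM⟩

end AuslanderReitenClass

theorem statement10_general [EnoughProjectives C] :
    StrongLeftFrobenius (GClass (fun P : C => Projective P) (fun P => Projective P))
      (fun P => Projective P) := by
  have hperp (P : C) (_ : Projective P) : leftPerp (fun Q : C => Projective Q) P :=
    leftPerp_of_projective
  have hgen := AuslanderReitenClass.isGenerator_projective (C := C)
  rw [AuslanderReitenClass.gClass_eq isSubcat_projective hperp hgen]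
  exact
    { AuslanderReitenClass.leftFrobenius isSubcat_projective hperp with
      gen := hgen
      proj := fun P N _ _ => leftPerp_of_projective (W := fun _ => True) N trivial }

/-- For any ring `R`, the pair (Gorenstein projective `R`-modules,
projective `R`-modules) is a strong left Frobenius pair in `R`-Mod. -/
theorem statement10 (R : Type u) [Ring R] [HasExt.{w} (ModuleCat.{u} R)] :
    StrongLeftFrobenius (C := ModuleCat.{u} R)
      (GClass (fun P => Projective P) (fun P => Projective P))
      (fun P => Projective P) :=
  statement10_general

end FrobeniusPaper
end

section
/- Let (X, W) be a strong left Frobenius pair in A. Then ((W, X̂), (X, Ŵ)) is a Hovey twin cotorsion pair on Thick(X) = X̂; in particular, Ext^1(W, Y) = 0 for all W ∈ W, Y ∈ Ŵ, and Cone(Ŵ, W) = CoCone(Ŵ, W) = Ŵ, where these classes are computed inside X̂. -/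
/-!
Dimension shifting gives `Extⁱ(W, X̂) = 0` for `i ≥ 1`. Since `W` generates `X`, the term next to
`M` in an `X`-resolution of `M` may be chosen in `W`; pulling an extension back along such a cover
splits it, and induction on the length shows that each `X̂ₙ` is closed under extensions. If `A` is
a retract of `M` with complement `A'`, and `0 → K → E → M → 0` starts a resolution of `M`, then
the kernel `L` of `E → A` is a retract of `L ×_{A'} E`, an extension of `E` by `K`; hence each
`X̂ₙ` is closed under direct summands, again by induction. Kernel comparisons then make `X̂`
thick. The same reasoning applies to `Ŵ`, as `W` is projective relative to itself.

Pushing resolutions out along embeddings of objects of `X` into objects of `W` yields the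
approximations of the cotorsion pair `(X, Ŵ)`. Finally, a sequence `0 → M → V → S → 0` with `M ∈
X̂`, `V ∈ Ŵ` and `S ∈ W` splits, so `M` is a direct summand of `V` and lies in `Ŵ`.
-/

open CategoryTheory CategoryTheory.Limits CategoryTheory.Abelian ZeroObject

universe w v u

namespace FrobeniusPaper

variable {C : Type u} [Category.{v} C] [Abelian C]

variable [HasExt.{w} C]

/-- `Cone(V, S)`: objects `M` admitting a short exact sequence `0 → V₀ → S₀ → M → 0` with
`V₀ ∈ V` and `S₀ ∈ S`. -/
def ConeCls (V S : C → Prop) (M : C) : Prop :=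
  ∃ (V₀ S₀ : C) (f : V₀ ⟶ S₀) (g : S₀ ⟶ M), IsSES f g ∧ V V₀ ∧ S S₀

/-- `CoCone(V, S)`: objects `M` admitting a short exact sequence `0 → M → V₀ → S₀ → 0` with
`V₀ ∈ V` and `S₀ ∈ S`. -/
def CoConeCls (V S : C → Prop) (M : C) : Prop :=
  ∃ (V₀ S₀ : C) (f : M ⟶ V₀) (g : V₀ ⟶ S₀), IsSES f g ∧ V V₀ ∧ S S₀

section ShortExactSequences

variable {𝒜 : Type u} [Category.{v} 𝒜] [Abelian 𝒜]
variable {A B D E K Y : 𝒜} {f : A ⟶ B} {g : B ⟶ D}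

lemma IsSES.zero_id (A : 𝒜) : IsSES (0 : 0 ⟶ A) (𝟙 A) :=
  ⟨zero_comp, (ShortComplex.Splitting.ofIsZeroOfIsIso _ (isZero_zero 𝒜)
    (inferInstanceAs (IsIso (𝟙 A)))).shortExact⟩

lemma IsSES.id_zero (A : 𝒜) : IsSES (𝟙 A) (0 : A ⟶ 0) :=
  ⟨comp_zero, (ShortComplex.Splitting.ofIsIsoOfIsZero _
    (inferInstanceAs (IsIso (𝟙 A))) (isZero_zero 𝒜)).shortExact⟩

lemma IsSES.biprod_inl_snd (A B : 𝒜) : IsSES (biprod.inl : A ⟶ A ⊞ B) biprod.snd :=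
  ⟨biprod.inl_snd, (ShortComplex.Splitting.ofHasBinaryBiproduct A B).shortExact⟩

lemma IsSES.of_splitting_symm {w : f ≫ g = 0} (σ : (ShortComplex.mk f g w).Splitting) :
    IsSES σ.s σ.r :=
  ⟨σ.s_r, ShortComplex.Splitting.shortExact
    { r := g, s := f, f_r := σ.s_g, s_g := σ.f_r, id := (add_comm _ _).trans σ.id }⟩

lemma IsSES.isPullback (h : IsSES f g) : IsPullback f (0 : A ⟶ 0) g 0 :=
  have := h.2.mono_f
  ⟨⟨by simp [h.1]⟩, ⟨PullbackCone.IsLimit.mk _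
    (fun s => h.2.exact.lift s.fst (by simp [s.condition]))
    (fun s => h.2.exact.lift_f s.fst _)
    (fun _ => (isZero_zero 𝒜).eq_of_tgt _ _)
    (fun s _ hm _ => (cancel_mono f).1 (hm.trans (h.2.exact.lift_f s.fst _).symm))⟩⟩

lemma IsSES.of_isPullback [Epi g] (sq : IsPullback f (0 : A ⟶ 0) g 0) : IsSES f g := by
  have w : f ≫ g = 0 := by simpa using sq.w
  have hf : Mono f := (MorphismProperty.monomorphisms 𝒜).of_isPullback sq.flip
    (inferInstanceAs (Mono (0 : 0 ⟶ D)))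
  refine ⟨w, .mk' (ShortComplex.exact_of_f_is_kernel _ ?_) hf inferInstance⟩
  exact KernelFork.IsLimit.ofι' f w fun x hx => ⟨sq.lift x 0 (by simp [hx]), sq.lift_fst _ _ _⟩

lemma IsSES.isPushout (h : IsSES f g) : IsPushout f (0 : A ⟶ 0) g 0 :=
  have := h.2.epi_g
  ⟨⟨by simp [h.1]⟩, ⟨PushoutCocone.IsColimit.mk _
    (fun s => h.2.exact.desc s.inl (by simp [s.condition]))
    (fun s => h.2.exact.g_desc s.inl _)
    (fun _ => (isZero_zero 𝒜).eq_of_src _ _)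
    (fun s _ hm _ => (cancel_epi g).1 (hm.trans (h.2.exact.g_desc s.inl _).symm))⟩⟩

lemma IsSES.of_isPushout [Mono f] (sq : IsPushout f (0 : A ⟶ 0) g 0) : IsSES f g := by
  have w : f ≫ g = 0 := by simpa using sq.w
  have hg : Epi g := (MorphismProperty.epimorphisms 𝒜).of_isPushout sq
    (inferInstanceAs (Epi (0 : A ⟶ 0)))
  refine ⟨w, .mk' (ShortComplex.exact_of_g_is_cokernel _ ?_) inferInstance hg⟩
  exact CokernelCofork.IsColimit.ofπ' g w fun x hx =>
    ⟨sq.desc x 0 (by simp [hx]), sq.inl_desc _ _ _⟩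

lemma IsSES.exists_of_isPullback (h : IsSES f g) {P : 𝒜} {t : P ⟶ B} {q : P ⟶ E} {b : E ⟶ D}
    (sq : IsPullback t q g b) : ∃ i : A ⟶ P, IsSES i q := by
  have : Epi q := (MorphismProperty.epimorphisms 𝒜).of_isPullback sq h.2.epi_g
  refine ⟨sq.lift f 0 (by simp [h.1]), .of_isPullback (.of_right ?_ (by simp) sq)⟩
  simpa using h.isPullback

lemma IsSES.exists_of_isPushout (h : IsSES f g) {P : 𝒜} {a : A ⟶ E} {t : B ⟶ P} {j : E ⟶ P}
    (sq : IsPushout f a t j) : ∃ p : P ⟶ D, IsSES j p := by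
  have : Mono j := (MorphismProperty.monomorphisms 𝒜).of_isPushout sq.flip h.2.mono_f
  refine ⟨sq.desc g 0 (by simp [h.1]), .of_isPushout (.of_top ?_ (by simp) sq)⟩
  simpa using h.isPushout

lemma IsSES.exists_pullback {k : K ⟶ E} {e : E ⟶ D} (h : IsSES f g) (h' : IsSES k e) :
    ∃ (P : 𝒜) (i : A ⟶ P) (q : P ⟶ E) (j : K ⟶ P) (t : P ⟶ B), IsSES i q ∧ IsSES j t :=
  have sq := IsPullback.of_hasPullback g e
  have ⟨i, hi⟩ := h.exists_of_isPullback sq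
  have ⟨j, hj⟩ := h'.exists_of_isPullback sq.flip
  ⟨_, i, _, j, _, hi, hj⟩

lemma IsSES.exists_pushout {a : A ⟶ E} {b : E ⟶ Y} (h : IsSES f g) (h' : IsSES a b) :
    ∃ (P : 𝒜) (j : E ⟶ P) (p : P ⟶ D) (t : B ⟶ P) (q : P ⟶ Y), IsSES j p ∧ IsSES t q :=
  have sq := IsPushout.of_hasPushout f a
  have ⟨p, hp⟩ := h.exists_of_isPushout sq
  have ⟨q, hq⟩ := h'.exists_of_isPushout sq.flip
  ⟨_, _, p, _, q, hp, hq⟩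

lemma IsSES.exists_kernel_comp {k : K ⟶ E} {e : E ⟶ B} (h : IsSES f g) (h' : IsSES k e) :
    ∃ (L : 𝒜) (l : L ⟶ E) (i : K ⟶ L) (p : L ⟶ A),
      IsSES l (e ≫ g) ∧ IsSES i p ∧ l ≫ e = p ≫ f := by
  have := h.2.epi_g
  have := h'.2.epi_g
  have sq := IsPullback.of_hasPullback e f
  obtain ⟨i, hi⟩ := h'.exists_of_isPullback sq
  have : Epi (e ≫ g) := epi_comp e g
  refine ⟨_, _, i, _, .of_isPullback ?_, hi, sq.w⟩
  simpa using sq.paste_vert h.isPullback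

lemma IsSES.exists_cokernel_comp {a : B ⟶ E} {b : E ⟶ Y} (h : IsSES f g) (h' : IsSES a b) :
    ∃ (V : 𝒜) (c : E ⟶ V) (j : D ⟶ V) (p : V ⟶ Y), IsSES (f ≫ a) c ∧ IsSES j p := by
  have := h.2.mono_f
  have := h'.2.mono_f
  have sq := IsPushout.of_hasPushout a g
  obtain ⟨p, hp⟩ := h'.exists_of_isPushout sq
  have : Mono (f ≫ a) := mono_comp f a
  refine ⟨_, pushout.inl a g, pushout.inr a g, p, .of_isPushout ?_, hp⟩
  simpa using h.isPushout.paste_horiz sq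

lemma IsSES.nonempty_splitting [HasExt.{w} 𝒜] (h : IsSES f g)
    (hExt : Subsingleton (Abelian.Ext D A 1)) : Nonempty (ShortComplex.mk f g h.1).Splitting := by
  obtain ⟨x, hx⟩ := Ext.covariant_sequence_exact₃ D h.2 (Ext.mk₀ (𝟙 D)) (zero_add 1)
    (Subsingleton.elim _ _)
  obtain ⟨s, rfl⟩ := (Ext.mk₀_bijective D B).2 x
  rw [Ext.mk₀_comp_mk₀] at hx
  exact ⟨.ofExactOfSection _ h.2.exact s ((Ext.mk₀_bijective D D).1 hx) h.2.mono_f⟩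

end ShortExactSequences

section Hat

variable {𝒜 : Type u} [Category.{v} 𝒜] [Abelian 𝒜] {X W U : 𝒜 → Prop} {M : 𝒜}

lemma HatAll.of_mem (hM : X M) : HatAll X M := ⟨0, hM⟩

lemma HatAll.of_isSES {K E : 𝒜} {f : K ⟶ E} {g : E ⟶ M} (h : IsSES f g) (hE : X E)
    (hK : HatAll X K) : HatAll X M :=
  have ⟨n, hn⟩ := hK
  ⟨n + 1, K, E, f, g, h, hE, hn⟩

lemma HatAll.induction {T : 𝒜 → Prop} (base : ∀ M, X M → T M)
    (step : ∀ {K E M : 𝒜} (f : K ⟶ E) (g : E ⟶ M), IsSES f g → X E → T K → T M)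
    (hM : HatAll X M) : T M := by
  obtain ⟨n, hn⟩ := hM
  induction n generalizing M with
  | zero => exact base M hn
  | succ n ih =>
    obtain ⟨K, E, f, g, h, hE, hK⟩ := hn
    exact step f g h hE (ih hK)

lemma HatAll.mono (hWX : ∀ M, W M → X M) (hM : HatAll W M) : HatAll X M :=
  hM.induction (fun _ hN => .of_mem (hWX _ hN)) fun _ _ h hE hK => .of_isSES h (hWX _ hE) hK

lemma HatAll.thickClosure (hM : HatAll X M) : thickClosure X M := fun _ hT hXT =>
  hM.induction hXT fun f g h hE hK => (hT.2 f g h).1 hK (hXT _ hE)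

lemma hat_monotone (h0 : X 0) : Monotone (Hat X) := by
  refine monotone_nat_of_le_succ fun n => ?_
  induction n with
  | zero => exact fun M hM => ⟨0, M, 0, 𝟙 M, IsSES.zero_id M, hM, h0⟩
  | succ n ih => exact fun M ⟨K, E, f, g, h, hE, hK⟩ => ⟨K, E, f, g, h, hE, ih K hK⟩

lemma coneCls_hatAll_iff (h0 : X 0) : ConeCls (HatAll X) X M ↔ HatAll X M := by
  refine ⟨fun ⟨_, _, _, _, h, hK, hE⟩ => .of_isSES h hE hK, fun ⟨n, hn⟩ => ?_⟩
  obtain ⟨K, E, f, g, h, hE, hK⟩ := hat_monotone h0 n.le_succ M hn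
  exact ⟨K, E, f, g, h, ⟨n, hK⟩, hE⟩

lemma IsCogenerator.coConeCls_of_coneCls (hW : IsCogenerator W X)
    (hM : ConeCls (HatAll W) X M) : CoConeCls (HatAll W) X M := by
  obtain ⟨Y, E, f, g, h, hY, hE⟩ := hM
  obtain ⟨W₀, X', a, b, hab, hW₀, hX'⟩ := hW.2 E hE
  obtain ⟨V, c, j, p, hc, hj⟩ := h.exists_cokernel_comp hab
  exact ⟨V, X', j, p, hj, .of_isSES hc hW₀ hY, hX'⟩

lemma IsCogenerator.coneCls_of_hatAll (hW : IsCogenerator W X) (hX : ExtClosed X) (h0 : W 0)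
    (hM : HatAll X M) : ConeCls (HatAll W) X M := by
  refine hM.induction (fun N hN => ⟨0, N, 0, 𝟙 N, .zero_id N, .of_mem h0, hN⟩) ?_
  intro K E M f g h hE hK
  obtain ⟨Y, X', c, d, hcd, hY, hX'⟩ := hW.coConeCls_of_coneCls hK
  obtain ⟨P, j, p, t, q, hjp, htq⟩ := h.exists_pushout hcd
  exact ⟨Y, P, j, p, hjp, hY, hX t q htq hE hX'⟩

variable [HasExt.{w} 𝒜]

lemma HatAll.rightPerp (hX : ∀ N, X N → rightPerp U N) (hM : HatAll X M) : rightPerp U M := by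
  refine hM.induction hX fun f g h hE hK P hP i hi => subsingleton_of_forall_eq 0 fun x => ?_
  have := hX _ hE P hP i hi
  have := hK P hP (i + 1) (by lia)
  obtain ⟨z, rfl⟩ := Ext.covariant_sequence_exact₃ P h.2 x rfl (Subsingleton.elim _ _)
  rw [Subsingleton.elim z 0, Ext.zero_comp]

end Hat

/-- `W` is a generator of `X` consisting of objects that are projective relative to `X`, where `X`
is closed under direct summands, extensions and kernels of epimorphisms. For a strong left Frobenius
pair `(X, W)` this holds for `W` in `X` and for `W` in itself, so that one theory covers `X̂` and
`Ŵ`. -/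
structure IsProjectiveGenerator {𝒜 : Type u} [Category.{v} 𝒜] [Abelian 𝒜] [HasExt.{w} 𝒜]
    (W X : 𝒜 → Prop) : Prop where
  isSubcat : IsSubcat X
  extClosed : ExtClosed X
  kerEpiClosed : KerEpiClosed X
  isGenerator : IsGenerator W X
  rightPerp : ∀ N, X N → rightPerp W N

namespace IsProjectiveGenerator

variable {𝒜 : Type u} [Category.{v} 𝒜] [Abelian 𝒜] [HasExt.{w} 𝒜] {X W : 𝒜 → Prop}
variable {A B D M : 𝒜} {f : A ⟶ B} {g : B ⟶ D}

lemma subsingleton_ext_one (hW : IsProjectiveGenerator W X) {P : 𝒜} (hP : W P)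
    (hM : HatAll X M) : Subsingleton (Abelian.Ext P M 1) :=
  hM.rightPerp hW.rightPerp P hP 1 le_rfl

lemma coneCls_of_hat_succ (hW : IsProjectiveGenerator W X) {n : ℕ} (hn : ExtClosed (Hat X n))
    (hM : Hat X (n + 1) M) : ConeCls (Hat X n) W M := by
  obtain ⟨K, E, f, g, h, hE, hK⟩ := hM
  obtain ⟨X', W₀, f', g', h', hW₀, hX'⟩ := hW.isGenerator.2 E hE
  obtain ⟨L, l, i, p, hl, hip, -⟩ := h.exists_kernel_comp h'
  exact ⟨L, W₀, l, _, hl, hn i p hip (hat_monotone hW.isSubcat.zero n.zero_le X' hX') hK, hW₀⟩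

lemma extClosed_hat (hW : IsProjectiveGenerator W X) (n : ℕ) : ExtClosed (Hat X n) := by
  induction n with
  | zero => exact hW.extClosed
  | succ n ih =>
    intro A B D f g h hA hD
    obtain ⟨L, Q, l, q, hlq, hL, hQ⟩ := hW.coneCls_of_hat_succ ih hD
    -- The pullback `S` of `B → D ← Q` is `A ⊞ Q`, so a cover of `A` gives one of `S`.
    obtain ⟨S, a, s, b, t, hAS, hLS⟩ := h.exists_pullback hlq
    obtain ⟨σ⟩ := hAS.nonempty_splitting (hW.subsingleton_ext_one hQ ⟨n + 1, hA⟩)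
    obtain ⟨K, P, k, p, hkp, hP, hK⟩ := hA
    obtain ⟨R, _, _, _, _, hQR, hKR⟩ := (IsSES.of_splitting_symm σ).exists_pullback hkp
    obtain ⟨N, m, i, j, hm, hij, -⟩ := hLS.exists_kernel_comp hKR
    exact ⟨N, R, m, _, hm, hW.extClosed _ _ hQR (hW.isGenerator.1 Q hQ) hP, ih i j hij hK hL⟩

lemma hat_of_retract (hW : IsProjectiveGenerator W X) (n : ℕ) (i : A ⟶ M) (p : M ⟶ A)
    (hip : i ≫ p = 𝟙 A) (hM : Hat X n M) : Hat X n A := by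
  induction n generalizing A M with
  | zero => exact hW.isSubcat.summand_closed i p hip hM
  | succ n ih =>
    obtain ⟨K, E, f, g, h, hE, hK⟩ := hM
    have : Epi p := (SplitEpi.mk i hip).epi
    have hp : IsSES (kernel.ι p) p :=
      ⟨kernel.condition p, .mk' (ShortComplex.exact_kernel p) inferInstance inferInstance⟩
    let σ := ShortComplex.Splitting.ofExactOfSection _ hp.2.exact i hip hp.2.mono_f
    obtain ⟨L, l, j, q, hl, hjq, hlq⟩ := hp.exists_kernel_comp h
    have hq : q = l ≫ g ≫ σ.r := by rw [reassoc_of% hlq, σ.f_r]; exact (Category.comp_id q).symm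
    -- `L` is a retract of the extension `L ×_{ker p} E` of `E` by `K`, embedded by `(𝟙, l)`.
    obtain ⟨z, hz⟩ := hjq.exists_of_isPullback (IsPullback.of_hasPullback q (g ≫ σ.r))
    have hZ : Hat X n (pullback q (g ≫ σ.r)) :=
      hW.extClosed_hat n _ _ hz hK (hat_monotone hW.isSubcat.zero n.zero_le E hE)
    refine ⟨L, E, l, g ≫ p, hl, hE, ih (pullback.lift (𝟙 L) l ?_) (pullback.fst _ _) ?_ hZ⟩
    · rw [Category.id_comp]; exact hq
    · exact pullback.lift_fst _ _ _

lemma hatAll_of_retract (hW : IsProjectiveGenerator W X) (i : A ⟶ M) (p : M ⟶ A)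
    (hip : i ≫ p = 𝟙 A) (hM : HatAll X M) : HatAll X A :=
  hM.imp fun n => hW.hat_of_retract n i p hip

lemma hatAll_of_iso (hW : IsProjectiveGenerator W X) (e : A ≅ B) (hA : HatAll X A) :
    HatAll X B :=
  hW.hatAll_of_retract e.inv e.hom e.inv_hom_id hA

lemma extClosed_hatAll (hW : IsProjectiveGenerator W X) : ExtClosed (HatAll X) :=
  fun _ _ _ f g h ⟨m, hA⟩ ⟨n, hD⟩ =>
    have hX := hat_monotone hW.isSubcat.zero
    ⟨max m n, hW.extClosed_hat _ f g h (hX (le_max_left m n) _ hA) (hX (le_max_right m n) _ hD)⟩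

lemma hatAll_of_hatAll_left (hW : IsProjectiveGenerator W X) (h : IsSES f g)
    (hA : HatAll X A) (hB : HatAll X B) : HatAll X D := by
  obtain ⟨K, E, k, e, hke, hK, hE⟩ := (coneCls_hatAll_iff hW.isSubcat.zero).2 hB
  obtain ⟨L, l, i, p, hl, hip, -⟩ := h.exists_kernel_comp hke
  exact .of_isSES hl hE (hW.extClosed_hatAll i p hip hK hA)

lemma hatAll_of_mem_right (hW : IsProjectiveGenerator W X) (h : IsSES f g)
    (hB : HatAll X B) (hD : X D) : HatAll X A := by
  obtain ⟨K, E, k, e, hke, hK, hE⟩ := (coneCls_hatAll_iff hW.isSubcat.zero).2 hB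
  obtain ⟨L, l, i, p, hl, hip, -⟩ := h.exists_kernel_comp hke
  exact .of_isSES hip (hW.kerEpiClosed _ _ hl hE hD) hK

lemma kerEpiClosed_hatAll (hW : IsProjectiveGenerator W X) : KerEpiClosed (HatAll X) := by
  intro A B D f g h hB hD
  obtain ⟨K, E, k, e, hke, hK, hE⟩ := (coneCls_hatAll_iff hW.isSubcat.zero).2 hD
  obtain ⟨P, i, q, j, t, hiq, hjt⟩ := h.exists_pullback hke
  exact hW.hatAll_of_mem_right hiq (hW.extClosed_hatAll j t hjt hK hB) hE

theorem isThickSub_hatAll (hW : IsProjectiveGenerator W X) : IsThickSub (HatAll X) :=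
  ⟨{ zero := .of_mem hW.isSubcat.zero
     iso_closed := hW.hatAll_of_iso
     biprod_closed := hW.extClosed_hatAll _ _ (.biprod_inl_snd _ _)
     summand_closed := hW.hatAll_of_retract },
    fun _ _ _ f g h => ⟨hW.hatAll_of_hatAll_left h, hW.extClosed_hatAll f g h,
      hW.kerEpiClosed_hatAll f g h⟩⟩

theorem thickClosure_iff_hatAll (hW : IsProjectiveGenerator W X) :
    thickClosure X M ↔ HatAll X M :=
  ⟨fun hM => hM _ hW.isThickSub_hatAll fun _ => .of_mem, HatAll.thickClosure⟩

theorem cotorsionPairOn_hatAll (hW : IsProjectiveGenerator W X) (hWsub : IsSubcat W) :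
    CotorsionPairOn (HatAll X) W (HatAll X) where
  subU _ hM := .of_mem (hW.isGenerator.1 _ hM)
  subV _ hM := hM
  isoU := hWsub.iso_closed
  summandU := hWsub.summand_closed
  isoV := hW.hatAll_of_iso
  summandV := hW.hatAll_of_retract
  ext1 _ _ := hW.subsingleton_ext_one
  res M := fun ⟨n, hn⟩ =>
    have ⟨K, E, f, g, h, hK, hE⟩ := hW.coneCls_of_hat_succ (hW.extClosed_hat n)
      (hat_monotone hW.isSubcat.zero n.le_succ M hn)
    ⟨K, E, f, g, h, hE, n, hK⟩
  cores M hM := ⟨M, 0, 𝟙 M, 0, .id_zero M, hWsub.zero, hM⟩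

lemma self (hW : IsProjectiveGenerator W X) (hWsub : IsSubcat W) : IsProjectiveGenerator W W where
  isSubcat := hWsub
  extClosed _ _ _ _ _ h hA hD :=
    have ⟨σ⟩ := h.nonempty_splitting (hW.rightPerp _ (hW.isGenerator.1 _ hA) _ hD 1 le_rfl)
    hWsub.iso_closed σ.isoBinaryBiproduct.symm (hWsub.biprod_closed hA hD)
  kerEpiClosed _ _ _ f g h hB hD :=
    have hA := hW.kerEpiClosed f g h (hW.isGenerator.1 _ hB) (hW.isGenerator.1 _ hD)
    have ⟨σ⟩ := h.nonempty_splitting (hW.rightPerp _ hA _ hD 1 le_rfl)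
    hWsub.summand_closed f σ.r σ.f_r hB
  isGenerator := ⟨fun _ => id, fun M hM => ⟨0, M, 0, 𝟙 M, .zero_id M, hM, hWsub.zero⟩⟩
  rightPerp _ hN := hW.rightPerp _ (hW.isGenerator.1 _ hN)

end IsProjectiveGenerator

namespace StrongLeftFrobenius

variable {𝒜 : Type u} [Category.{v} 𝒜] [Abelian 𝒜] [HasExt.{w} 𝒜] {X W : 𝒜 → Prop} {M : 𝒜}

lemma isProjectiveGenerator (hF : StrongLeftFrobenius X W) : IsProjectiveGenerator W X where
  isSubcat := hF.subX
  extClosed := hF.extClosed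
  kerEpiClosed := hF.kerEpiClosed
  isGenerator := hF.gen
  rightPerp N hN P hP := hF.proj P N hP hN

lemma isProjectiveGenerator_self (hF : StrongLeftFrobenius X W) : IsProjectiveGenerator W W :=
  hF.isProjectiveGenerator.self hF.subW

theorem cotorsionPairOn_hatAll (hF : StrongLeftFrobenius X W) :
    CotorsionPairOn (HatAll X) X (HatAll W) where
  subU _ := .of_mem
  subV _ := .mono hF.gen.1
  isoU := hF.subX.iso_closed
  summandU := hF.subX.summand_closed
  isoV := hF.isProjectiveGenerator_self.hatAll_of_iso
  summandV := hF.isProjectiveGenerator_self.hatAll_of_retract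
  ext1 M _ hM hN := hN.rightPerp hF.perp M hM 1 le_rfl
  res _ hM :=
    have ⟨V, U, f, g, h, hV, hU⟩ := hF.cogen.coneCls_of_hatAll hF.extClosed hF.subW.zero hM
    ⟨V, U, f, g, h, hU, hV⟩
  cores _ hM :=
    have ⟨V, U, f, g, h, hV, hU⟩ := hF.cogen.coConeCls_of_coneCls
      (hF.cogen.coneCls_of_hatAll hF.extClosed hF.subW.zero hM)
    ⟨V, U, f, g, h, hU, hV⟩

theorem coConeCls_hatAll_iff (hF : StrongLeftFrobenius X W) (hM : HatAll X M) :
    CoConeCls (HatAll W) W M ↔ HatAll W M := by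
  refine ⟨fun ⟨V, S, f, g, h, hV, hS⟩ => ?_, fun hM =>
    ⟨M, 0, 𝟙 M, 0, .id_zero M, hM, hF.subW.zero⟩⟩
  obtain ⟨σ⟩ := h.nonempty_splitting (hF.isProjectiveGenerator.subsingleton_ext_one hS hM)
  exact hF.isProjectiveGenerator_self.hatAll_of_retract f σ.r σ.f_r hV

end StrongLeftFrobenius

theorem statement13_general {C : Type u} [Category.{v} C] [Abelian C] [HasExt.{w} C]
    (X W : C → Prop) (hF : StrongLeftFrobenius X W) :
    CotorsionPairOn (HatAll X) W (HatAll X) ∧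
    CotorsionPairOn (HatAll X) X (HatAll W) ∧
    (∀ M N, W M → HatAll W N → Subsingleton (Abelian.Ext M N 1)) ∧
    (∀ M, HatAll X M → (ConeCls (HatAll W) W M ↔ HatAll W M)) ∧
    (∀ M, HatAll X M → (CoConeCls (HatAll W) W M ↔ HatAll W M)) ∧
    (∀ M, thickClosure X M ↔ HatAll X M) :=
  ⟨hF.isProjectiveGenerator.cotorsionPairOn_hatAll hF.subW,
    hF.cotorsionPairOn_hatAll,
    fun _ _ => hF.isProjectiveGenerator_self.subsingleton_ext_one,
    fun _ _ => coneCls_hatAll_iff hF.subW.zero,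
    fun _ => hF.coConeCls_hatAll_iff,
    fun _ => hF.isProjectiveGenerator.thickClosure_iff_hatAll⟩

/-- For a strong left Frobenius pair `(X, W)`, `((W, X̂), (X, Ŵ))` is a
Hovey twin cotorsion pair on `Thick(X) = X̂`; in particular `Ext¹(W, Ŵ) = 0` and, inside `X̂`,
`Cone(Ŵ, W) = CoCone(Ŵ, W) = Ŵ`. -/
theorem statement13 {C : Type u} [Category.{v} C] [Abelian C]
    [EnoughProjectives C] [EnoughInjectives C] [HasExt.{w} C]
    (X W : C → Prop) (hF : StrongLeftFrobenius X W) :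
    CotorsionPairOn (HatAll X) W (HatAll X) ∧
    CotorsionPairOn (HatAll X) X (HatAll W) ∧
    (∀ M N, W M → HatAll W N → Subsingleton (Abelian.Ext M N 1)) ∧
    (∀ M, HatAll X M → (ConeCls (HatAll W) W M ↔ HatAll W M)) ∧
    (∀ M, HatAll X M → (CoConeCls (HatAll W) W M ↔ HatAll W M)) ∧
    (∀ M, thickClosure X M ↔ HatAll X M) :=
  statement13_general X W hF

end FrobeniusPaper
end
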